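/- arXiv:2401.14190 — 3 statements merged into one kernel-verified Lean document; each statement's English description precedes it below -/
import Mathlib

section
/- Let n, k be natural numbers, let v₁, …, v_k ∈ ℚ^n, let W₀ ⊆ ℝ^n be the ℝ-linear span of v₁, …, v_k (viewed in ℝ^n via the coercion ℚ → ℝ), and let D₁ ∈ ℚ^n. Suppose D₂ ∈ ℝ^n satisfies D₂ − D₁ ∈ W₀ and D₂ ≥ 0 componentwise. Then there exist ℓ ≥ 1, rational vectors G₁, …, G_ℓ ∈ ℚ^n with Gᵢ − D₁ in the ℚ-linear span of v₁, …, v_k and Gᵢ ≥ 0 componentwise for each i, and positive real numbers t₁, …, t_ℓ with t₁ + ⋯ + t_ℓ = 1, such that D₂ = t₁ G₁ + ⋯ + t_ℓ G_ℓ. (This is the decomposition claim in the proof of Lemma 2.7(b) of the paper: every point of the rational polyhedron V = {G ∈ D₁ + W₀ : G ≥ 0} is a convex combination of finitely many rational points of V.) -/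
/-!
A `ℚ`-linear map `φ : ℝ → ℚ` with `φ 1 = 1` sends a real point `x` of `D₁ + W₀` to a rational
point `φ ∘ x` of the same affine subspace, and sends vanishing coordinates to `0`. Write the
coordinates of `x` as rational combinations of real numbers that are linearly independent over
`ℚ`: the values of `φ` on these can be prescribed, in particular as close to the numbers themselves
as we please. As a real number lies between two rational numbers arbitrarily close to it, `x` is a
convex combination of such points `φ ∘ x` arbitrarily close to `x`, whose coordinates are then
positive wherever those of `x` are.
-/

open Set Submodule Topology
open scoped Matrix Pointwise

section DenseSubsets

variable {F ι : Type*} [Field F] [LinearOrder F] [IsStrictOrderedRing F] [TopologicalSpace F]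
  [OrderTopology F]

theorem mem_convexHull_inter_of_dense {s u : Set F} {a : F} (hs : Dense s) (hu : u ∈ 𝓝 a) :
    a ∈ convexHull F (u ∩ s) := by
  obtain ⟨l, r, ⟨hla, har⟩, hlr⟩ := mem_nhds_iff_exists_Ioo_subset.1 hu
  obtain ⟨p, hps, hlp, hpa⟩ := hs.exists_between hla
  obtain ⟨q, hqs, haq, hqr⟩ := hs.exists_between har
  have hp : p ∈ u ∩ s := ⟨hlr ⟨hlp, hpa.trans har⟩, hps⟩
  have hq : q ∈ u ∩ s := ⟨hlr ⟨hla.trans haq, hqr⟩, hqs⟩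
  refine segment_subset_convexHull hp hq ?_
  rw [segment_eq_Icc (hpa.trans haq).le]
  exact ⟨hpa.le, haq.le⟩

theorem mem_convexHull_inter_pi_of_dense [Finite ι] {s : ι → Set F} {u : Set (ι → F)} {a : ι → F}
    (hs : ∀ i, Dense (s i)) (hu : u ∈ 𝓝 a) : a ∈ convexHull F (u ∩ univ.pi s) := by
  rw [nhds_pi, Filter.mem_pi] at hu
  obtain ⟨I, -, t, ht, htu⟩ := hu
  have hsub : univ.pi (fun i => t i ∩ s i) ⊆ u ∩ univ.pi s := fun _ hy =>
    ⟨htu fun i _ => (hy i trivial).1, fun i _ => (hy i trivial).2⟩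
  exact convexHull_mono hsub <|
    mem_convexHull_pi fun i _ => mem_convexHull_inter_of_dense (hs i) (ht i)

end DenseSubsets

section LinearFunctionals

variable {K F ι κ : Type*}

theorem linearMap_comp_mem_span_of_mem_span_algebraMap_comp [CommSemiring K] [Semiring F]
    [Algebra K F] {v : κ → ι → K} {x : ι → F}
    (hx : x ∈ span F (range fun j => algebraMap K F ∘ v j)) (φ : F →ₗ[K] K) :
    φ ∘ x ∈ span K (range v) := by
  induction hx using span_induction generalizing φ with
  | mem _ hx =>
    obtain ⟨j, rfl⟩ := hx
    have hφ : φ ∘ algebraMap K F ∘ v j = φ 1 • v j := by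
      funext i
      simp [Algebra.algebraMap_eq_smul_one, mul_comm]
    rw [hφ]
    exact smul_mem _ _ (subset_span ⟨j, rfl⟩)
  | zero =>
    have hφ : φ ∘ (0 : ι → F) = 0 := funext fun _ => map_zero φ
    rw [hφ]
    exact zero_mem _
  | add x y _ _ hx hy =>
    have hφ : φ ∘ (x + y) = φ ∘ x + φ ∘ y := funext fun i => map_add φ (x i) (y i)
    rw [hφ]
    exact add_mem (hx φ) (hy φ)
  | smul a _ _ hx => exact hx (φ ∘ₗ LinearMap.mulLeft K a)

theorem exists_mulVec_eq_and_forall_exists_linearMap_comp_eq [Finite ι] [Field K] [Ring F]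
    [Algebra K F] (x : ι → F) :
    ∃ (m : ℕ) (A : Matrix ι (Fin m) K) (b : Fin m → F), A.map (algebraMap K F) *ᵥ b = x ∧
      ∀ q : Fin m → K, ∃ φ : F →ₗ[K] K, φ ∘ x = A *ᵥ q := by
  have : FiniteDimensional K (span K (range x)) := .span_of_finite K (finite_range x)
  let B := Module.finBasis K (span K (range x))
  let y : ι → span K (range x) := fun i => ⟨x i, subset_span ⟨i, rfl⟩⟩
  refine ⟨_, .of fun i => B.repr (y i), fun k => B k, funext fun i => ?_, fun q => ?_⟩
  · calc ∑ k, algebraMap K F (B.repr (y i) k) * B k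
        = ((∑ k, B.repr (y i) k • B k : span K (range x)) : F) := by
          simp only [← Algebra.smul_def, coe_sum, coe_smul]
      _ = x i := congrArg Subtype.val (B.sum_repr (y i))
  · obtain ⟨φ, hφ⟩ := LinearMap.exists_extend (B.constr K q)
    refine ⟨φ, funext fun i => ?_⟩
    calc φ (x i) = B.constr K q (y i) := LinearMap.congr_fun hφ (y i)
      _ = ∑ k, B.repr (y i) k * q k := by
        simp only [Module.Basis.constr_apply_fintype, B.equivFun_apply, smul_eq_mul]

variable [Finite ι] [Field K] [Field F] [LinearOrder F] [IsStrictOrderedRing F]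
  [TopologicalSpace F] [OrderTopology F] [Algebra K F]

theorem mem_convexHull_inter_range_linearMap_comp (hK : DenseRange (algebraMap K F)) {x : ι → F}
    {u : Set (ι → F)} (hu : u ∈ 𝓝 x) :
    x ∈ convexHull F (u ∩ range fun φ : F →ₗ[K] K => algebraMap K F ∘ φ ∘ x) := by
  obtain ⟨m, A, b, hAb, hA⟩ := exists_mulVec_eq_and_forall_exists_linearMap_comp_eq (K := K) x
  let T := (A.map (algebraMap K F)).mulVecLin
  have hT : Continuous T := continuous_const.matrix_mulVec continuous_id
  have hb : b ∈ convexHull F (T ⁻¹' u ∩ univ.pi fun _ => range (algebraMap K F)) :=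
    mem_convexHull_inter_pi_of_dense (fun _ => hK) <|
      hT.continuousAt.preimage_mem_nhds (by simpa [T, hAb] using hu)
  have hTb := mem_image_of_mem T hb
  rw [T.image_convexHull, show T b = x from hAb] at hTb
  refine convexHull_mono ?_ hTb
  rintro _ ⟨z, ⟨hzu, hz⟩, rfl⟩
  choose q hq using fun k => hz k trivial
  obtain rfl : algebraMap K F ∘ q = z := funext hq
  obtain ⟨φ, hφ⟩ := hA q
  refine ⟨hzu, φ, funext fun i => ?_⟩
  calc algebraMap K F ((φ ∘ x) i) = algebraMap K F ((A *ᵥ q) i) := by rw [hφ]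
    _ = T (algebraMap K F ∘ q) i := RingHom.map_mulVec (algebraMap K F) A q i

theorem mem_convexHull_inter_image_linearMap_comp_of_map_one
    (hK : DenseRange (algebraMap K F)) {x : ι → F} {u : Set (ι → F)} (hu : u ∈ 𝓝 x) :
    x ∈ convexHull F
      (u ∩ (fun φ : F →ₗ[K] K => algebraMap K F ∘ φ ∘ x) '' {φ | φ 1 = 1}) := by
  obtain ⟨π, hπ⟩ := (Algebra.linearMap K F).exists_leftInverse_of_injective
    (LinearMap.ker_eq_bot.2 (algebraMap K F).injective)
  replace hπ (a : K) : π (algebraMap K F a) = a := LinearMap.congr_fun hπ a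
  have hπ_one : π 1 = 1 := by simpa using hπ 1
  let r := algebraMap K F ∘ π ∘ x
  have hu' : (r +ᵥ ·) ⁻¹' u ∈ 𝓝 (x - r) :=
    (continuous_const_vadd r).continuousAt.preimage_mem_nhds (by simpa using hu)
  have hx := vadd_mem_vadd_set (a := r) (mem_convexHull_inter_range_linearMap_comp hK hu')
  rw [← convexHull_vadd, vadd_eq_add, add_sub_cancel] at hx
  refine convexHull_mono ?_ hx
  rintro _ ⟨_, ⟨hψu, ψ, rfl⟩, rfl⟩
  -- Precomposing `ψ` with the projection `a ↦ a - π a`, which kills `1`, leaves `π 1 = 1` intact.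
  refine ⟨hψu, π + ψ ∘ₗ (LinearMap.id - Algebra.linearMap K F ∘ₗ π), ?_, ?_⟩
  · simp [hπ_one]
  · funext i
    simp [r]

theorem mem_convexHull_image_nonneg_linearMap_comp_of_map_one
    (hK : DenseRange (algebraMap K F)) {x : ι → F} (hx : ∀ i, 0 ≤ x i) :
    x ∈ convexHull F ((fun φ : F →ₗ[K] K => algebraMap K F ∘ φ ∘ x) ''
      {φ | φ 1 = 1 ∧ ∀ i, 0 ≤ algebraMap K F (φ (x i))}) := by
  have hu : ∀ᶠ y in 𝓝 x, ∀ i, 0 < x i → 0 < y i :=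
    Filter.eventually_all.2 fun i => Filter.eventually_imp_distrib_left.2 fun hi =>
      (continuous_apply i).continuousAt.eventually_const_lt hi
  refine convexHull_mono ?_ (mem_convexHull_inter_image_linearMap_comp_of_map_one hK hu)
  rintro _ ⟨hpos, φ, hφ, rfl⟩
  refine ⟨φ, ⟨hφ, fun i => ?_⟩, rfl⟩
  rcases (hx i).eq_or_lt with hxi | hxi
  · simp [← hxi]
  · exact (hpos i hxi).le

end LinearFunctionals

theorem exists_fin_pos_sum_smul_eq_of_mem_convexHull {F E : Type*} [Field F] [LinearOrder F]
    [IsStrictOrderedRing F] [AddCommGroup E] [Module F E] {s : Set E} {x : E}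
    (hx : x ∈ convexHull F s) :
    ∃ ℓ : ℕ, 1 ≤ ℓ ∧ ∃ (z : Fin ℓ → E) (t : Fin ℓ → F),
      (∀ i, z i ∈ s) ∧ (∀ i, 0 < t i) ∧ ∑ i, t i = 1 ∧ x = ∑ i, t i • z i := by
  obtain ⟨ι, _, z, t, hz, -, ht, hsum, hzx⟩ := eq_pos_convex_span_of_mem_convexHull hx
  have : Nonempty ι := not_isEmpty_iff.1 fun _ => by simp at hsum
  let e := (Fintype.equivFin ι).symm
  refine ⟨Fintype.card ι, Fintype.card_pos, z ∘ e, t ∘ e, fun i => hz ⟨e i, rfl⟩,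
    fun i => ht (e i), ?_, ?_⟩
  · exact (e.sum_comp t).trans hsum
  · exact hzx.symm.trans (e.sum_comp fun i => t i • z i).symm

theorem nonneg_point_of_rational_affine_subspace_is_convex_combination_general
    {K F ι κ : Type*} [Finite ι] [Field K] [Field F] [LinearOrder F] [IsStrictOrderedRing F]
    [TopologicalSpace F] [OrderTopology F] [Algebra K F] (hK : DenseRange (algebraMap K F))
    (v : κ → ι → K) (D₁ : ι → K) (D₂ : ι → F)
    (hmem : (fun i => D₂ i - algebraMap K F (D₁ i)) ∈
      span F (range fun j i => algebraMap K F (v j i)))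
    (hpos : ∀ i, 0 ≤ D₂ i) :
    ∃ ℓ : ℕ, 1 ≤ ℓ ∧ ∃ (G : Fin ℓ → ι → K) (t : Fin ℓ → F),
      (∀ i, G i - D₁ ∈ span K (range v)) ∧ (∀ i j, 0 ≤ algebraMap K F (G i j)) ∧
      (∀ i, 0 < t i) ∧ ∑ i, t i = 1 ∧ D₂ = ∑ i, t i • fun j => algebraMap K F (G i j) := by
  obtain ⟨ℓ, hℓ, z, t, hz, ht, hsum, hD₂⟩ := exists_fin_pos_sum_smul_eq_of_mem_convexHull
    (mem_convexHull_image_nonneg_linearMap_comp_of_map_one hK hpos)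
  choose φ hφ hφz using hz
  obtain rfl : (fun i => algebraMap K F ∘ φ i ∘ D₂) = z := funext hφz
  refine ⟨ℓ, hℓ, fun i => φ i ∘ D₂, t, fun i => ?_, fun i => (hφ i).2, ht, hsum, hD₂⟩
  have hφD₁ : φ i ∘ D₂ - D₁ = φ i ∘ fun j => D₂ j - algebraMap K F (D₁ j) := by
    funext j
    simp [Algebra.algebraMap_eq_smul_one, (hφ i).1]
  rw [hφD₁]
  exact linearMap_comp_mem_span_of_mem_span_algebraMap_comp hmem (φ i)

/-- Every nonnegative real point of the rational affine subspace
`D₁ + span ℝ {v₁, …, v_k}` is a convex combination of finitely many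
nonnegative rational points of that affine subspace. -/
theorem nonneg_point_of_rational_affine_subspace_is_convex_combination
    (n k : ℕ) (v : Fin k → (Fin n → ℚ)) (D₁ : Fin n → ℚ) (D₂ : Fin n → ℝ)
    (hmem : (fun i => D₂ i - (D₁ i : ℝ)) ∈
      Submodule.span ℝ (Set.range fun j => fun i => ((v j i : ℚ) : ℝ)))
    (hpos : ∀ i, 0 ≤ D₂ i) :
    ∃ (ℓ : ℕ), 1 ≤ ℓ ∧
      ∃ (G : Fin ℓ → (Fin n → ℚ)) (t : Fin ℓ → ℝ),
        (∀ i, G i - D₁ ∈ Submodule.span ℚ (Set.range v)) ∧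
        (∀ i j, 0 ≤ G i j) ∧
        (∀ i, 0 < t i) ∧
        (∑ i, t i = 1) ∧
        D₂ = ∑ i, t i • fun j => ((G i j : ℚ) : ℝ) := by
  simpa using nonneg_point_of_rational_affine_subspace_is_convex_combination_general
    Rat.denseRange_cast v D₁ D₂ hmem hpos
end

section
/- Let n, k be natural numbers, let v₁, …, v_k ∈ ℚ^n, let W₀ ⊆ ℝ^n be the ℝ-linear span of v₁, …, v_k (viewed in ℝ^n via the coercion ℚ → ℝ), and let D₁ ∈ ℚ^n with D₁ ≥ 0 componentwise. Assume that D₁ is the unique vector G ∈ ℚ^n with G ≥ 0 componentwise and G − D₁ in the ℚ-linear span of v₁, …, v_k. Then D₁ is also the unique nonnegative real representative of its coset: every D₂ ∈ ℝ^n with D₂ − D₁ ∈ W₀ and D₂ ≥ 0 componentwise satisfies D₂ = D₁. (This is the abstract content of Lemma 2.7(b) of the paper: on a ℚ-factorial projective variety, if D₁ ≥ 0, D₂ ≥ 0 are ℝ-linearly equivalent and κ(X, D₁) = 0, then D₁ = D₂, where the κ = 0 hypothesis enters exactly through the uniqueness of the nonnegative rational representative and v₁, …, v_k play the role of the principal divisors.)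 -/
/-!
Write `D₂ = D₁ + ∑ cᵢ vᵢ` with real `cᵢ`. A `ℚ`-linear map `φ : ℝ → ℚ` with `φ 1 = 1`, applied
coordinatewise, sends `D₂` to the rational vector `D₁ + ∑ φ(cᵢ) vᵢ` of the same coset. Choosing
the values of `φ` on a `ℚ`-basis of `ℝ`, one can make `φ` as close to the identity as desired at
the finitely many coordinates of `D₂`; as `φ 0 = 0`, the vector `φ ∘ D₂` is then nonnegative.
Hence the nonnegative rational points of the coset are dense in its nonnegative real points,
and if there is only one of the former there is only one of the latter.
-/

open Set Submodule

section Span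

variable {F K ι : Type*}

theorem comp_mem_span_of_mem_span_algebraMap_comp [CommSemiring F] [Semiring K] [Algebra F K]
    (φ : K →ₗ[F] F) {s : Set (ι → F)} {x : ι → K}
    (hx : x ∈ span K ((algebraMap F K ∘ ·) '' s)) : φ ∘ x ∈ span F s := by
  change φ.compLeft ι x ∈ span F s
  induction hx using span_induction generalizing φ with
  | mem _ h =>
    obtain ⟨w, hw, rfl⟩ := h
    have : φ.compLeft ι (algebraMap F K ∘ w) = φ 1 • w := by
      ext j
      simp [Algebra.algebraMap_eq_smul_one, mul_comm]
    exact this ▸ smul_mem _ _ (subset_span hw)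
  | zero => exact map_zero (φ.compLeft ι) ▸ zero_mem _
  | add x y _ _ hx hy => exact map_add (φ.compLeft ι) x y ▸ add_mem (hx φ) (hy φ)
  | smul c _ _ hx => exact hx (φ ∘ₗ LinearMap.mulLeft F c)

theorem comp_sub_mem_span_of_map_one [CommRing F] [Ring K] [Algebra F K]
    {φ : K →ₗ[F] F} (hφ : φ 1 = 1) {s : Set (ι → F)} {a : ι → F} {x : ι → K}
    (hx : x - algebraMap F K ∘ a ∈ span K ((algebraMap F K ∘ ·) '' s)) :
    φ ∘ x - a ∈ span F s := by
  have : φ ∘ (x - algebraMap F K ∘ a) = φ ∘ x - a := by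
    ext j
    simp [Algebra.algebraMap_eq_smul_one, hφ]
  exact this ▸ comp_mem_span_of_mem_span_algebraMap_comp φ hx

end Span

section Density

variable {F K : Type*} [Field F] [Ring K] [Algebra F K] [TopologicalSpace K] [ContinuousAdd K]
  [ContinuousConstSMul F K]

theorem linearMap_mem_closure_range_algebraMap_comp {V : Type*} [AddCommGroup V] [Module F V]
    (hd : DenseRange (algebraMap F K)) (f : V →ₗ[F] K) :
    ⇑f ∈ closure (range fun φ : V →ₗ[F] F ↦ algebraMap F K ∘ φ) := by
  let b := Module.Basis.ofVectorSpace F V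
  have hcont : Continuous fun e : _ → K ↦ ⇑(b.constr F e) := by
    refine continuous_pi fun x ↦ ?_
    simp only [Module.Basis.constr_apply, Finsupp.sum]
    fun_prop
  have hmaps : MapsTo (fun e ↦ ⇑(b.constr F e)) (range (Pi.map fun _ ↦ algebraMap F K))
      (range fun φ : V →ₗ[F] F ↦ algebraMap F K ∘ φ) := by
    rintro _ ⟨q, rfl⟩
    have : Algebra.linearMap F K ∘ₗ b.constr F q = b.constr F (Pi.map (fun _ ↦ algebraMap F K) q) :=
      b.ext fun i ↦ by simp
    exact ⟨b.constr F q, congrArg DFunLike.coe this⟩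
  have hf : b.constr F (f ∘ b) = f := b.constr_self F f
  rw [← hf]
  exact map_mem_closure (f := fun e ↦ ⇑(b.constr F e)) hcont
    (DenseRange.piMap (fun _ ↦ hd) (f ∘ b)) hmaps

theorem id_mem_closure_algebraMap_comp_map_one [Nontrivial K] (hd : DenseRange (algebraMap F K)) :
    id ∈ closure ((fun φ : K →ₗ[F] F ↦ algebraMap F K ∘ φ) '' {φ | φ 1 = 1}) := by
  obtain ⟨ψ, hψ⟩ := (Algebra.linearMap F K).exists_leftInverse_of_injective
    (LinearMap.ker_eq_bot.2 (algebraMap F K).injective)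
  have hψ1 : ψ 1 = 1 := by simpa using LinearMap.congr_fun hψ 1
  -- Correcting along the retraction `ψ` makes a functional `φ` fix `1` without dividing by `φ 1`.
  let T : (K → K) → K → K := fun g x ↦ g (x - algebraMap F K (ψ x)) + algebraMap F K (ψ x)
  have hT : Continuous T := by fun_prop
  have hTid : T id = id := by
    ext x
    simp [T]
  have hmaps : MapsTo T (range fun φ : K →ₗ[F] F ↦ algebraMap F K ∘ φ)
      ((fun φ : K →ₗ[F] F ↦ algebraMap F K ∘ φ) '' {φ | φ 1 = 1}) := by
    rintro _ ⟨φ, rfl⟩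
    refine ⟨φ ∘ₗ (LinearMap.id - Algebra.linearMap F K ∘ₗ ψ) + ψ, ?_, ?_⟩
    · simp [hψ1]
    · ext x
      simp [T]
  exact hTid ▸ map_mem_closure hT
    (linearMap_mem_closure_range_algebraMap_comp hd LinearMap.id) hmaps

end Density

section Nonneg

variable {F K ι : Type*} [Field F] [LinearOrder F] [Ring K] [LinearOrder K] [IsStrictOrderedRing K]
  [Algebra F K] [IsOrderedModule F K] [TopologicalSpace K] [ContinuousAdd K]
  [ContinuousConstSMul F K] [OrderClosedTopology K] [Finite ι]

theorem mem_closure_nonneg_of_sub_mem_span (hd : DenseRange (algebraMap F K)) {s : Set (ι → F)}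
    {a : ι → F} {x : ι → K} (hx : ∀ j, 0 ≤ x j)
    (hmem : x - algebraMap F K ∘ a ∈ span K ((algebraMap F K ∘ ·) '' s)) :
    x ∈ closure ((algebraMap F K ∘ ·) '' {y | (∀ j, 0 ≤ y j) ∧ y - a ∈ span F s}) := by
  have hxφ : x ∈ closure ((· ∘ x) '' ((fun φ : K →ₗ[F] F ↦ algebraMap F K ∘ φ) '' {φ | φ 1 = 1})) :=
    map_mem_closure (f := (· ∘ x)) (by fun_prop) (id_mem_closure_algebraMap_comp_map_one hd)
      (mapsTo_image _ _)
  have hU : IsOpen ({j | 0 < x j}.pi fun _ ↦ Ioi (0 : K)) :=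
    isOpen_set_pi (toFinite _) fun _ _ ↦ isOpen_Ioi
  refine closure_mono ?_ (hU.inter_closure ⟨fun j hj ↦ hj, hxφ⟩)
  rintro _ ⟨hpos, _, ⟨φ, hφ, rfl⟩, rfl⟩
  refine ⟨φ ∘ x, ⟨fun j ↦ ?_, comp_sub_mem_span_of_map_one hφ hmem⟩, rfl⟩
  rcases (hx j).eq_or_lt with hj | hj
  · simp [← hj]
  · have hφj : 0 < algebraMap F K (φ (x j)) := hpos j hj
    contrapose! hφj
    simpa using algebraMap_mono K hφj.le

theorem unique_nonneg_rational_representative_implies_unique_real_general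
    (hd : DenseRange (algebraMap F K)) {s : Set (ι → F)} {a : ι → F}
    (huniq : ∀ y : ι → F, (∀ j, 0 ≤ y j) → y - a ∈ span F s → y = a) {x : ι → K}
    (hmem : x - algebraMap F K ∘ a ∈ span K ((algebraMap F K ∘ ·) '' s)) (hx : ∀ j, 0 ≤ x j) :
    x = algebraMap F K ∘ a := by
  have hsub : (algebraMap F K ∘ ·) '' {y | (∀ j, 0 ≤ y j) ∧ y - a ∈ span F s} ⊆
      {algebraMap F K ∘ a} := by
    rintro _ ⟨y, ⟨hy, hya⟩, rfl⟩
    rw [huniq y hy hya, mem_singleton_iff]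
  simpa using closure_mono hsub (mem_closure_nonneg_of_sub_mem_span hd hx hmem)

end Nonneg

/-- If `D₁` is the unique nonnegative rational vector in its coset modulo the
ℚ-linear span of finitely many rational vectors, then `D₁` is also the unique
nonnegative real vector in its coset modulo their ℝ-linear span. -/
theorem unique_nonneg_rational_representative_implies_unique_real
    (n k : ℕ) (v : Fin k → (Fin n → ℚ)) (D₁ : Fin n → ℚ)
    (hD₁pos : ∀ j, 0 ≤ D₁ j)
    (huniq : ∀ G : Fin n → ℚ, (∀ j, 0 ≤ G j) →
      G - D₁ ∈ Submodule.span ℚ (Set.range v) → G = D₁)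
    (D₂ : Fin n → ℝ)
    (hmem : (fun j => D₂ j - (D₁ j : ℝ)) ∈
      Submodule.span ℝ (Set.range fun i => fun j => ((v i j : ℚ) : ℝ)))
    (hD₂pos : ∀ j, 0 ≤ D₂ j) :
    D₂ = fun j => ((D₁ j : ℚ) : ℝ) := by
  exact unique_nonneg_rational_representative_implies_unique_real_general
    (Rat.denseRange_cast (𝕜 := ℝ)) huniq (by rwa [← range_comp]) hD₂pos
end

section
/- Let n be a natural number, let W₀ ⊆ ℝ^n be an ℝ-linear subspace, let G, H ∈ ℝ^n with H ≥ 0 componentwise, and let (ε_m)_{m ∈ ℕ} be a strictly decreasing sequence of positive real numbers with limit 0. Assume: (i) for every m ∈ ℕ there exists D_m ∈ ℝ^n with D_m ≥ 0 componentwise and D_m − (G + ε_m H) ∈ W₀; and (ii) the coset G + ε₁ H + W₀ contains exactly one componentwise nonnegative vector D₁. Then D₁ − ε₁ H ≥ 0 componentwise and (D₁ − ε₁ H) − G ∈ W₀; in particular, the coset G + W₀ contains a componentwise nonnegative vector. (This is the abstract content of the proof of Lemma 3.1 of the paper: for each m, D_m + (ε₁ − ε_m)H is a nonnegative vector of the coset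 G + ε₁H + W₀, hence equals D₁ by uniqueness, so D₁ ≥ (ε₁ − ε_m)H for all m, and letting m → ∞ gives D₁ ≥ ε₁ H, whence G + W₀ contains the nonnegative vector D₁ − ε₁ H; in the paper this shows that if κ_ι(X, G + ε_m H) = 0 for all m then κ_ι(X, G) = 0.) -/
/-!
Let `D₁` be the greatest nonnegative element of `v + h + W`. If `v + δ + W` contains a nonnegative
`D` and `δ ≤ h`, then `D + (h - δ)` is a nonnegative element of `v + h + W`, so it is at most `D₁`
and therefore `h - δ ≤ D₁`. This inequality is closed in `δ`; letting `δ` tend to `0` gives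
`h ≤ D₁`, and `D₁ - h` is a nonnegative element of `v + W`.
-/

section NonnegTranslate

variable {E : Type*} [AddCommGroup E] [Preorder E]

/-- The nonnegative elements of the translate `v + W` of a set `W`. If `W` is a subspace of `ℝⁿ`,
these are the componentwise nonnegative vectors of the coset of `v`. -/
def nonnegTranslate (W : Set E) (v : E) : Set E :=
  {D | 0 ≤ D ∧ D - v ∈ W}

variable [IsOrderedAddMonoid E] {W : Set E} {v h x y D D₁ : E}

theorem add_sub_mem_nonnegTranslate (hD : D ∈ nonnegTranslate W x) (hxy : x ≤ y) :
    D + (y - x) ∈ nonnegTranslate W y := by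
  refine ⟨add_nonneg hD.1 (sub_nonneg.mpr hxy), ?_⟩
  have hsub : D + (y - x) - y = D - x := by abel
  exact hsub ▸ hD.2

theorem sub_le_of_mem_upperBounds_nonnegTranslate
    (hD₁ : D₁ ∈ upperBounds (nonnegTranslate W y)) (hx : (nonnegTranslate W x).Nonempty)
    (hxy : x ≤ y) : y - x ≤ D₁ := by
  obtain ⟨D, hD⟩ := hx
  calc
    y - x ≤ D + (y - x) := le_add_of_nonneg_left hD.1
    _ ≤ D₁ := hD₁ (add_sub_mem_nonnegTranslate hD hxy)

variable [TopologicalSpace E] [ClosedIciTopology E]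

theorem le_of_mem_upperBounds_nonnegTranslate
    (hD₁ : D₁ ∈ upperBounds (nonnegTranslate W (v + h)))
    (hzero : 0 ∈ closure {δ | δ ≤ h ∧ (nonnegTranslate W (v + δ)).Nonempty}) :
    h ≤ D₁ := by
  have hsubset : {δ | δ ≤ h ∧ (nonnegTranslate W (v + δ)).Nonempty} ⊆ Set.Ici (h - D₁) := by
    rintro δ ⟨hδ, hne⟩
    have hle : v + h - (v + δ) ≤ D₁ :=
      sub_le_of_mem_upperBounds_nonnegTranslate hD₁ hne (by gcongr)
    rw [add_sub_add_left_eq_sub] at hle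
    exact sub_le_comm.mp hle
  exact sub_nonpos.mp (closure_minimal hsubset isClosed_Ici hzero)

theorem nonneg_in_limit_coset_general
    (hD₁ : IsGreatest (nonnegTranslate W (v + h)) D₁)
    (hzero : 0 ∈ closure {δ | δ ≤ h ∧ (nonnegTranslate W (v + δ)).Nonempty}) :
    D₁ - h ∈ nonnegTranslate W v := by
  refine ⟨sub_nonneg.mpr (le_of_mem_upperBounds_nonnegTranslate hD₁.2 hzero), ?_⟩
  rw [sub_sub, add_comm h v]
  exact hD₁.1.2

end NonnegTranslate

/-- If for a strictly decreasing null sequence `ε` of positive reals the coset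
`G + ε m • H + W₀` contains a nonnegative vector for every `m`, and the coset
`G + ε 0 • H + W₀` contains exactly one nonnegative vector `D₁`, then
`D₁ - ε 0 • H` is nonnegative and lies in the coset `G + W₀`; in particular,
the coset `G + W₀` contains a componentwise nonnegative vector. -/
theorem nonneg_in_limit_coset
    (n : ℕ) (W₀ : Submodule ℝ (Fin n → ℝ)) (G H : Fin n → ℝ)
    (hH : ∀ j, 0 ≤ H j)
    (ε : ℕ → ℝ) (hanti : StrictAnti ε) (hpos : ∀ m, 0 < ε m)
    (hlim : Filter.Tendsto ε Filter.atTop (nhds 0))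
    (hexists : ∀ m, ∃ D : Fin n → ℝ, (∀ j, 0 ≤ D j) ∧ D - (G + ε m • H) ∈ W₀)
    (D₁ : Fin n → ℝ) (hD₁pos : ∀ j, 0 ≤ D₁ j)
    (hD₁mem : D₁ - (G + ε 0 • H) ∈ W₀)
    (huniq : ∀ D : Fin n → ℝ, (∀ j, 0 ≤ D j) → D - (G + ε 0 • H) ∈ W₀ →
      D = D₁) :
    (∀ j, 0 ≤ D₁ j - ε 0 * H j) ∧ (D₁ - ε 0 • H) - G ∈ W₀ := by
  have hD₁ : IsGreatest (nonnegTranslate W₀ (G + ε 0 • H)) D₁ :=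
    ⟨⟨hD₁pos, hD₁mem⟩, fun D hD => (huniq D hD.1 hD.2).le⟩
  have hlimH : Filter.Tendsto (fun m => ε m • H) Filter.atTop (nhds 0) := by
    simpa only [zero_smul] using hlim.smul_const H
  have hle (m : ℕ) : ε m • H ≤ ε 0 • H :=
    smul_le_smul_of_nonneg_right (hanti.antitone m.zero_le) hH
  exact nonneg_in_limit_coset_general hD₁
    (mem_closure_of_tendsto hlimH (.of_forall fun m => ⟨hle m, hexists m⟩))
end
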